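/- For every natural number m, the polynomials P = y^{m+1} − z·x^m, Q = z^{m+1} − x·y^m, R = x^{m+1} − y·z^m in ℂ[x, y, z] satisfy the identity P·(∂R/∂y − ∂Q/∂z) + Q·(∂P/∂z − ∂R/∂x) + R·(∂Q/∂x − ∂P/∂y) = 0. -/

import Mathlib

open MvPolynomial

/-
Under `P dx + Q dy + R dz ↔ (P, Q, R)` the condition `ω ∧ dω = 0` reads `ω ⬝ᵥ curl ω = 0`, and the
Jouanolou form is the cross product of the Euler field `(x, y, z)` with `V = (z ^ m, x ^ m, y ^ m)`.
Since `curl (v ⨯₃ w)` is the Lie bracket `[w, v]` modulo the span of `v` and `w`, to which `v ⨯₃ w`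
is orthogonal, the form `v ⨯₃ w` is integrable as soon as `[v, w]` lies in that span (Frobenius).
Euler's identity gives `[(x, y, z), V] = (m - 1) V` for every `V` homogeneous of degree `m`.
-/

open Matrix

section VectorCalculus

variable {ι k A : Type*} [Fintype ι] [CommSemiring k] [CommSemiring A] [Algebra k A]

/-- The derivative `(v · ∇) w` of the vector field `w` along `v`, where both fields are given by
their coefficients and the derivations `D i` play the role of the partial derivatives. -/
def convectiveDeriv (D : ι → Derivation k A A) (v w : ι → A) : ι → A :=
  fun j ↦ ∑ i, v i * D i (w j)

/-- The divergence of a vector field with respect to the derivations `D i`. -/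
def divergence (D : ι → Derivation k A A) (v : ι → A) : A :=
  ∑ i, D i (v i)

end VectorCalculus

section Frobenius

variable {ι k A : Type*} [CommSemiring k] [CommRing A] [Algebra k A]

/-- The coefficients of the Lie bracket of two vector fields `v` and `w`: when the `D i` commute,
`∑ j, coordBracket D v w j • D j` is the commutator of `∑ i, v i • D i` and `∑ i, w i • D i`. -/
def coordBracket [Fintype ι] (D : ι → Derivation k A A) (v w : ι → A) : ι → A :=
  convectiveDeriv D v w - convectiveDeriv D w v

/-- The curl of a vector field in dimension three with respect to the derivations `D i`. It encodes
the exterior derivative of the 1-form with the same coefficients. -/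
def curl (D : Fin 3 → Derivation k A A) (v : Fin 3 → A) : Fin 3 → A :=
  ![D 1 (v 2) - D 2 (v 1), D 2 (v 0) - D 0 (v 2), D 0 (v 1) - D 1 (v 0)]

theorem curl_cross (D : Fin 3 → Derivation k A A) (v w : Fin 3 → A) :
    curl D (v ⨯₃ w) = divergence D w • v - divergence D v • w + coordBracket D w v := by
  ext j
  simp only [curl, cross_apply, divergence, coordBracket, convectiveDeriv, Fin.sum_univ_three,
    cons_val, map_sub, Derivation.leibniz, smul_eq_mul, Pi.add_apply, Pi.sub_apply, Pi.smul_apply]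
  fin_cases j <;> dsimp <;> ring

theorem cross_dotProduct_eq_zero_of_mem_span {v w u : Fin 3 → A}
    (hu : u ∈ Submodule.span A {v, w}) : v ⨯₃ w ⬝ᵥ u = 0 := by
  obtain ⟨a, b, rfl⟩ := Submodule.mem_span_pair.mp hu
  simp [dotProduct_comm (v ⨯₃ w)]

theorem cross_dotProduct_curl_cross_eq_zero_of_mem_span {D : Fin 3 → Derivation k A A}
    {v w : Fin 3 → A} (h : coordBracket D w v ∈ Submodule.span A {v, w}) :
    v ⨯₃ w ⬝ᵥ curl D (v ⨯₃ w) = 0 := by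
  have hv : v ∈ Submodule.span A {v, w} := Submodule.mem_span_of_mem (by simp)
  have hw : w ∈ Submodule.span A {v, w} := Submodule.mem_span_of_mem (by simp)
  rw [curl_cross]
  exact cross_dotProduct_eq_zero_of_mem_span <|
    add_mem (sub_mem (Submodule.smul_mem _ _ hv) (Submodule.smul_mem _ _ hw)) h

end Frobenius

section Euler

variable {σ k : Type*} [Fintype σ]

theorem convectiveDeriv_pderiv_X [CommSemiring k] (V : σ → MvPolynomial σ k) :
    convectiveDeriv pderiv V X = V := by
  classical
  ext1 j
  simp [convectiveDeriv, pderiv_X, Pi.single_apply]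

theorem convectiveDeriv_X_of_isHomogeneous [CommSemiring k] {m : ℕ}
    {V : σ → MvPolynomial σ k} (hV : ∀ i, (V i).IsHomogeneous m) :
    convectiveDeriv pderiv X V = m • V :=
  funext fun i ↦ (hV i).sum_X_mul_pderiv

theorem coordBracket_X_of_isHomogeneous [CommRing k] {m : ℕ} {V : σ → MvPolynomial σ k}
    (hV : ∀ i, (V i).IsHomogeneous m) : coordBracket pderiv V X = V - m • V := by
  rw [coordBracket, convectiveDeriv_pderiv_X, convectiveDeriv_X_of_isHomogeneous hV]

end Euler

theorem stmt13_general {k : Type*} [CommRing k] {m : ℕ} {V : Fin 3 → MvPolynomial (Fin 3) k}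
    (hV : ∀ i, (V i).IsHomogeneous m) : X ⨯₃ V ⬝ᵥ curl pderiv (X ⨯₃ V) = 0 := by
  have hmem : V ∈ Submodule.span (MvPolynomial (Fin 3) k) {X, V} :=
    Submodule.mem_span_of_mem (by simp)
  apply cross_dotProduct_curl_cross_eq_zero_of_mem_span
  rw [coordBracket_X_of_isHomogeneous hV]
  exact sub_mem hmem (nsmul_mem hmem m)

/-- Integrability `ω ∧ dω = 0` of the Jouanolou 1-form
`ω = (y^{m+1} − z·x^m)dx + (z^{m+1} − x·y^m)dy + (x^{m+1} − y·z^m)dz`, where the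
variables `x, y, z` are `X 0, X 1, X 2` in `ℂ[x, y, z] = MvPolynomial (Fin 3) ℂ`. -/
theorem stmt13 (m : ℕ) (P Q R : MvPolynomial (Fin 3) ℂ)
    (hP : P = X 1 ^ (m + 1) - X 2 * X 0 ^ m)
    (hQ : Q = X 2 ^ (m + 1) - X 0 * X 1 ^ m)
    (hR : R = X 0 ^ (m + 1) - X 1 * X 2 ^ m) :
    P * (pderiv 1 R - pderiv 2 Q) + Q * (pderiv 2 P - pderiv 0 R)
      + R * (pderiv 0 Q - pderiv 1 P) = 0 := by
  have hV : ∀ i, (![X 2 ^ m, X 0 ^ m, X 1 ^ m] i : MvPolynomial (Fin 3) ℂ).IsHomogeneous m := by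
    simp [Fin.forall_fin_succ, isHomogeneous_X_pow]
  simpa only [curl, cross_apply, vec3_dotProduct, cons_val, ← pow_succ', ← hP, ← hQ, ← hR]
    using stmt13_general hV
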